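/- Let Ω be an open subset of ℝⁿ and let f = (u₁, v₁) and g = (u₂, v₂) be H-continuous pairs on Ω. Let s = u₁ + u₂ and t = v₁ + v₂. Then both pairs F(I(S(t))) = (I(I(S(t))), S(I(S(t)))) and F(S(I(s))) = (I(S(I(s))), S(S(I(s)))) are H-continuous, both satisfy the inclusion s(x) ≤ (lower component)(x) ≤ (upper component)(x) ≤ t(x) for all x ∈ Ω, and consequently both are equal to f ⊕ g, the unique H-continuous pair contained in the pointwise interval sum f + g. -/

import Mathlib

open Set

/-- Points of `ℝⁿ`. -/
abbrev Pt (n : ℕ) := EuclideanSpace ℝ (Fin n)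

/-- Lower Baire operator `I(D,Ω,f)(x) = sup_{δ>0} inf { f y : y ∈ B_δ(x) ∩ D }`,
where `B_δ(x) = { y ∈ Ω : ‖y - x‖ < δ }`. -/
noncomputable def Ilow {n : ℕ} (D Om : Set (Pt n)) (f : Pt n → ℝ) (x : Pt n) : ℝ :=
  sSup {a : ℝ | ∃ δ : ℝ, 0 < δ ∧
    a = sInf (f '' {y | y ∈ Om ∧ ‖y - x‖ < δ ∧ y ∈ D})}

/-- Upper Baire operator `S(D,Ω,f)(x) = inf_{δ>0} sup { f y : y ∈ B_δ(x) ∩ D }`. -/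
noncomputable def Shigh {n : ℕ} (D Om : Set (Pt n)) (f : Pt n → ℝ) (x : Pt n) : ℝ :=
  sInf {a : ℝ | ∃ δ : ℝ, 0 < δ ∧
    a = sSup (f '' {y | y ∈ Om ∧ ‖y - x‖ < δ ∧ y ∈ D})}

/-- `f`, defined on `D ⊆ Ω`, is locally bounded relative to `Ω`. -/
def LocBddOn {n : ℕ} (Om D : Set (Pt n)) (f : Pt n → ℝ) : Prop :=
  ∀ x ∈ Om, ∃ δ : ℝ, 0 < δ ∧ ∃ M : ℝ,
    ∀ y, y ∈ Om → ‖y - x‖ < δ → y ∈ D → |f y| < M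

/-- `(u, v)` encodes an interval-valued function `x ↦ [u x, v x]` on `Om`. -/
def IntervalPair {n : ℕ} (Om : Set (Pt n)) (u v : Pt n → ℝ) : Prop :=
  LocBddOn Om Om u ∧ LocBddOn Om Om v ∧ ∀ x ∈ Om, u x ≤ v x

/-- The pair `(u, v)` is S-continuous on `Om`: `I(u) = u` and `S(v) = v`. -/
def SCont {n : ℕ} (Om : Set (Pt n)) (u v : Pt n → ℝ) : Prop :=
  ∀ x ∈ Om, Ilow Om Om u x = u x ∧ Shigh Om Om v x = v x

/-- The pair `(u, v)` is Hausdorff continuous on `Om`. -/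
def HCont {n : ℕ} (Om : Set (Pt n)) (u v : Pt n → ℝ) : Prop :=
  ∀ p q : Pt n → ℝ, LocBddOn Om Om p → LocBddOn Om Om q →
    (∀ x ∈ Om, u x ≤ p x ∧ p x ≤ q x ∧ q x ≤ v x) →
    ∀ x ∈ Om, Ilow Om Om p x = u x ∧ Shigh Om Om q x = v x

/-- `(u, v)` is an H-continuous interval pair on `Om`. -/
def HContPair {n : ℕ} (Om : Set (Pt n)) (u v : Pt n → ℝ) : Prop :=
  IntervalPair Om u v ∧ HCont Om u v

/-- Lower endpoint of the pointwise interval product. -/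
noncomputable def imin {n : ℕ} (u₁ v₁ u₂ v₂ : Pt n → ℝ) (x : Pt n) : ℝ :=
  min (min (u₁ x * u₂ x) (u₁ x * v₂ x)) (min (v₁ x * u₂ x) (v₁ x * v₂ x))

/-- Upper endpoint of the pointwise interval product. -/
noncomputable def imax {n : ℕ} (u₁ v₁ u₂ v₂ : Pt n → ℝ) (x : Pt n) : ℝ :=
  max (max (u₁ x * u₂ x) (u₁ x * v₂ x)) (max (v₁ x * u₂ x) (v₁ x * v₂ x))

/-- `(pl, pu)` is the H-continuous pair contained pointwise in the interval sum of
`(u₁, v₁)` and `(u₂, v₂)`, i.e. `(pl, pu) = (u₁,v₁) ⊕ (u₂,v₂)`. -/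
def IsOplus {n : ℕ} (Om : Set (Pt n)) (u₁ v₁ u₂ v₂ pl pu : Pt n → ℝ) : Prop :=
  HContPair Om pl pu ∧
    ∀ x ∈ Om, u₁ x + u₂ x ≤ pl x ∧ pl x ≤ pu x ∧ pu x ≤ v₁ x + v₂ x

/-- `(ql, qu)` is the H-continuous pair contained pointwise in the interval product of
`(u₁, v₁)` and `(u₂, v₂)`, i.e. `(ql, qu) = (u₁,v₁) ⊗ (u₂,v₂)`. -/
def IsOtimes {n : ℕ} (Om : Set (Pt n)) (u₁ v₁ u₂ v₂ ql qu : Pt n → ℝ) : Prop :=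
  HContPair Om ql qu ∧
    ∀ x ∈ Om, imin u₁ v₁ u₂ v₂ x ≤ ql x ∧ ql x ≤ qu x ∧ qu x ≤ imax u₁ v₁ u₂ v₂ x

/-- bounded on bounded subsets of `Om` -/
def BB {n : ℕ} (Om : Set (Pt n)) (f : Pt n → ℝ) : Prop :=
  ∀ R : ℝ, ∃ M : ℝ, ∀ y ∈ Om, ‖y‖ < R → |f y| ≤ M

/-- pointwise order on `Om` -/
def LEon {n : ℕ} (Om : Set (Pt n)) (f g : Pt n → ℝ) : Prop := ∀ x ∈ Om, f x ≤ g x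

section aux
variable {n : ℕ} {Om : Set (Pt n)}

lemma Shigh_eq (D : Set (Pt n)) (f : Pt n → ℝ) (x : Pt n) :
    Shigh D Om f x = - Ilow D Om (-f) x := by
  have key : ∀ A : Set (Pt n), sInf ((-f) '' A) = - sSup (f '' A) := by
    intro A
    rw [← Real.sInf_neg]
    congr 1
    ext a
    simp [neg_eq_iff_eq_neg]
  unfold Shigh Ilow
  rw [← neg_neg (sInf _), ← Real.sSup_neg]
  congr 2
  ext a
  simp only [Set.mem_neg, Set.mem_ofPred_eq, key, neg_eq_iff_eq_neg]

lemma Ilow_eq (D : Set (Pt n)) (f : Pt n → ℝ) (x : Pt n) :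
    Ilow D Om f x = - Shigh D Om (-f) x := by
  rw [Shigh_eq]; simp

lemma BB.neg {f : Pt n → ℝ} (h : BB Om f) : BB Om (-f) := by
  intro R
  obtain ⟨M, hM⟩ := h R
  exact ⟨M, fun y hy hR => by simpa using hM y hy hR⟩

lemma BB.add {f g : Pt n → ℝ} (h : BB Om f) (h' : BB Om g) : BB Om (f + g) := by
  intro R
  obtain ⟨M, hM⟩ := h R
  obtain ⟨M', hM'⟩ := h' R
  exact ⟨M + M', fun y hy hR => (abs_add_le _ _).trans (add_le_add (hM y hy hR) (hM' y hy hR))⟩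

lemma BB.between {f g p : Pt n → ℝ} (h : BB Om f) (h' : BB Om g) (h1 : LEon Om f p)
    (h2 : LEon Om p g) : BB Om p := by
  intro R
  obtain ⟨M, hM⟩ := h R
  obtain ⟨M', hM'⟩ := h' R
  refine ⟨max M M', fun y hy hR => abs_le.2 ⟨?_, ?_⟩⟩
  · have := (abs_le.1 (hM y hy hR)).1
    have := h1 y hy
    have := le_max_left M M'
    linarith
  · have := (abs_le.1 (hM' y hy hR)).2
    have := h2 y hy
    have := le_max_right M M'
    linarith

lemma BB.locBdd {f : Pt n → ℝ} (h : BB Om f) : LocBddOn Om Om f := by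
  intro x hx
  obtain ⟨M, hM⟩ := h (‖x‖ + 1)
  refine ⟨1, one_pos, M + 1, fun y hy hd _ => ?_⟩
  have : ‖y‖ < ‖x‖ + 1 := by
    have := norm_add_le (y - x) x
    rw [sub_add_cancel] at this
    linarith
  linarith [hM y hy this]

lemma BB.bddBelow {f : Pt n → ℝ} (h : BB Om f) (x : Pt n) (δ : ℝ) :
    BddBelow (f '' {y | y ∈ Om ∧ ‖y - x‖ < δ ∧ y ∈ Om}) := by
  obtain ⟨M, hM⟩ := h (‖x‖ + δ)
  refine ⟨-M, ?_⟩
  rintro _ ⟨y, ⟨hy, hd, _⟩, rfl⟩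
  have : ‖y‖ < ‖x‖ + δ := by
    have := norm_add_le (y - x) x
    rw [sub_add_cancel] at this
    linarith
  exact (abs_le.1 (hM y hy this)).1

lemma bddAbove_aux (f : Pt n → ℝ) {x : Pt n} (hx : x ∈ Om) :
    BddAbove {a : ℝ | ∃ δ : ℝ, 0 < δ ∧
    a = sInf (f '' {y | y ∈ Om ∧ ‖y - x‖ < δ ∧ y ∈ Om})} := by
  refine ⟨max (f x) 0, ?_⟩
  rintro _ ⟨δ, hδ, rfl⟩
  by_cases hb : BddBelow (f '' {y | y ∈ Om ∧ ‖y - x‖ < δ ∧ y ∈ Om})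
  · exact (csInf_le hb ⟨x, ⟨hx, by simpa using hδ, hx⟩, rfl⟩).trans (le_max_left _ _)
  · rw [Real.sInf_of_not_bddBelow hb]; exact le_max_right _ _

lemma Ilow_le {f : Pt n → ℝ} (h : BB Om f) {x : Pt n} (hx : x ∈ Om) : Ilow Om Om f x ≤ f x := by
  unfold Ilow
  refine csSup_le ⟨_, 1, one_pos, rfl⟩ ?_
  rintro _ ⟨δ, hδ, rfl⟩
  exact csInf_le (h.bddBelow x δ) ⟨x, ⟨hx, by simpa using hδ, hx⟩, rfl⟩

lemma le_Ilow {f : Pt n → ℝ} {x : Pt n} (hx : x ∈ Om) {c δ : ℝ} (hδ : 0 < δ)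
    (h : ∀ y ∈ Om, ‖y - x‖ < δ → c ≤ f y) : c ≤ Ilow Om Om f x := by
  unfold Ilow
  refine le_csSup_of_le (bddAbove_aux f hx) ⟨δ, hδ, rfl⟩ ?_
  refine le_csInf ⟨_, x, ⟨hx, by simpa using hδ, hx⟩, rfl⟩ ?_
  rintro _ ⟨y, ⟨hy, hd, _⟩, rfl⟩
  exact h y hy hd

lemma lt_Ilow {f : Pt n → ℝ} (h : BB Om f) {x : Pt n} {c : ℝ} (hc : c < Ilow Om Om f x) :
    ∃ δ, 0 < δ ∧ ∀ y ∈ Om, ‖y - x‖ < δ → c < f y := by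
  unfold Ilow at hc
  obtain ⟨_, ⟨δ, hδ, rfl⟩, ha⟩ := exists_lt_of_lt_csSup (by exact ⟨_, 1, one_pos, rfl⟩) hc
  exact ⟨δ, hδ, fun y hy hd => ha.trans_le (csInf_le (h.bddBelow x δ) ⟨y, ⟨hy, hd, hy⟩, rfl⟩)⟩

lemma Shigh_lt {f : Pt n → ℝ} (h : BB Om f) {x : Pt n} {c : ℝ} (hc : Shigh Om Om f x < c) :
    ∃ δ, 0 < δ ∧ ∀ y ∈ Om, ‖y - x‖ < δ → f y < c := by
  rw [Shigh_eq] at hc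
  obtain ⟨δ, hδ, H⟩ := lt_Ilow h.neg (neg_lt.1 hc)
  exact ⟨δ, hδ, fun y hy hd => neg_lt_neg_iff.1 (H y hy hd)⟩

lemma Shigh_le {f : Pt n → ℝ} {x : Pt n} (hx : x ∈ Om) {c δ : ℝ} (hδ : 0 < δ)
    (h : ∀ y ∈ Om, ‖y - x‖ < δ → f y ≤ c) : Shigh Om Om f x ≤ c := by
  rw [Shigh_eq]
  exact neg_le.1 (le_Ilow hx hδ fun y hy hd => neg_le_neg (h y hy hd))

lemma I_le {f : Pt n → ℝ} (h : BB Om f) : LEon Om (Ilow Om Om f) f := fun _ hx => Ilow_le h hx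

lemma I_mono {f g : Pt n → ℝ} (hf : BB Om f) (h : LEon Om f g) :
    LEon Om (Ilow Om Om f) (Ilow Om Om g) := by
  intro x hx
  refine le_of_forall_lt fun c hc => ?_
  obtain ⟨c', h1, h2⟩ := exists_between hc
  obtain ⟨δ, hδ, H⟩ := lt_Ilow hf h2
  exact h1.trans_le (le_Ilow hx hδ fun y hy hd => (H y hy hd).le.trans (h y hy))

lemma I_idem {f : Pt n → ℝ} (hf : BB Om f) :
    LEon Om (Ilow Om Om f) (Ilow Om Om (Ilow Om Om f)) := by
  intro x hx
  refine le_of_forall_lt fun c hc => ?_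
  obtain ⟨c', h1, h2⟩ := exists_between hc
  obtain ⟨δ, hδ, H⟩ := lt_Ilow hf h2
  refine h1.trans_le (le_Ilow hx (half_pos hδ) fun y hy hd => ?_)
  refine le_Ilow hy (half_pos hδ) fun z hz hd' => (H z hz ?_).le
  have := norm_add_le (z - y) (y - x)
  rw [sub_add_sub_cancel] at this
  linarith

lemma BB.I {f : Pt n → ℝ} (hf : BB Om f) : BB Om (Ilow Om Om f) := by
  intro R
  obtain ⟨M, hM⟩ := hf (R + 1)
  refine ⟨M, fun y hy hR => abs_le.2 ⟨?_, ?_⟩⟩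
  · refine le_Ilow hy one_pos fun z hz hd => (abs_le.1 (hM z hz ?_)).1
    have := norm_add_le (z - y) y
    rw [sub_add_cancel] at this
    linarith
  · exact (Ilow_le hf hy).trans (abs_le.1 (hM y hy (by linarith))).2

lemma S_fun (f : Pt n → ℝ) : Shigh Om Om f = - Ilow Om Om (-f) := funext fun x => Shigh_eq _ f x

lemma LEon.neg {f g : Pt n → ℝ} (h : LEon Om f g) : LEon Om (-g) (-f) :=
  fun x hx => neg_le_neg (h x hx)

lemma LEon.trans {f g k : Pt n → ℝ} (h : LEon Om f g) (h' : LEon Om g k) : LEon Om f k :=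
  fun x hx => (h x hx).trans (h' x hx)

lemma BB.S {f : Pt n → ℝ} (hf : BB Om f) : BB Om (Shigh Om Om f) := by
  rw [S_fun]; exact hf.neg.I.neg

lemma le_S {f : Pt n → ℝ} (h : BB Om f) : LEon Om f (Shigh Om Om f) := by
  rw [S_fun]; simpa using (I_le h.neg).neg

lemma S_mono {f g : Pt n → ℝ} (hg : BB Om g) (h : LEon Om f g) :
    LEon Om (Shigh Om Om f) (Shigh Om Om g) := by
  rw [S_fun, S_fun]; exact (I_mono hg.neg h.neg).neg

lemma S_idem {f : Pt n → ℝ} (hf : BB Om f) :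
    LEon Om (Shigh Om Om (Shigh Om Om f)) (Shigh Om Om f) := by
  rw [S_fun (Shigh Om Om f), S_fun f, neg_neg]; exact (I_idem hf.neg).neg

lemma I_add {f g : Pt n → ℝ} (hf : BB Om f) (hg : BB Om g)
    (h1 : LEon Om f (Ilow Om Om f)) (h2 : LEon Om g (Ilow Om Om g)) :
    LEon Om (f + g) (Ilow Om Om (f + g)) := by
  intro x hx
  refine le_of_forall_pos_sub_le fun ε hε => ?_
  obtain ⟨δ, hδ, H⟩ := lt_Ilow hf (c := f x - ε / 2) (x := x) (by linarith [h1 x hx])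
  obtain ⟨δ', hδ', H'⟩ := lt_Ilow hg (c := g x - ε / 2) (x := x) (by linarith [h2 x hx])
  refine le_Ilow hx (lt_min hδ hδ') fun y hy hd => ?_
  have := H y hy (hd.trans_le (min_le_left _ _))
  have := H' y hy (hd.trans_le (min_le_right _ _))
  simp only [Pi.add_apply]
  linarith

lemma S_add {f g : Pt n → ℝ} (hf : BB Om f) (hg : BB Om g)
    (h1 : LEon Om (Shigh Om Om f) f) (h2 : LEon Om (Shigh Om Om g) g) :
    LEon Om (Shigh Om Om (f + g)) (f + g) := by
  rw [S_fun] at h1 h2 ⊢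
  have := (I_add hf.neg hg.neg (by simpa using h1.neg) (by simpa using h2.neg)).neg
  rw [← neg_add, neg_neg] at this
  exact this

lemma below_aux {u : Pt n → ℝ} (h : LEon Om (Ilow Om Om u) u) (R : ℝ) :
    ∃ M : ℝ, ∀ y ∈ Om, ‖y‖ < R → M ≤ u y := by
  by_contra hcon
  push Not at hcon
  obtain ⟨z, hz, hzR, hz0⟩ := hcon 0
  have h0 := h z hz
  have hR : 0 < R := (norm_nonneg z).trans_lt hzR
  have : (0 : ℝ) ≤ Ilow Om Om u z := by
    unfold Ilow
    refine le_csSup (bddAbove_aux u hz) ⟨R + ‖z‖, by positivity, ?_⟩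
    rw [Real.sInf_of_not_bddBelow]
    rintro ⟨M, hM⟩
    obtain ⟨y, hy, hyR, hlt⟩ := hcon M
    refine absurd (hM ⟨y, ⟨hy, ?_, hy⟩, rfl⟩) (not_le.2 hlt)
    have := norm_sub_le y z
    linarith
  linarith

lemma above_aux {v : Pt n → ℝ} (h : LEon Om v (Shigh Om Om v)) (R : ℝ) :
    ∃ M : ℝ, ∀ y ∈ Om, ‖y‖ < R → v y ≤ M := by
  rw [S_fun] at h
  obtain ⟨M, hM⟩ := below_aux (u := -v) (by simpa using h.neg) R
  exact ⟨-M, fun y hy hR => by have := hM y hy hR; simp only [Pi.neg_apply] at this; linarith⟩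

lemma HContPair.facts {u v : Pt n → ℝ} (h : HContPair Om u v) :
    BB Om u ∧ BB Om v ∧ LEon Om u v ∧ LEon Om u (Ilow Om Om u) ∧ LEon Om (Shigh Om Om v) v ∧
    LEon Om v (Shigh Om Om u) ∧ LEon Om (Ilow Om Om v) u := by
  obtain ⟨⟨hu, hv, huv⟩, H⟩ := h
  have a := H u u hu hu (fun x hx => ⟨le_rfl, le_rfl, huv x hx⟩)
  have b := H v v hv hv (fun x hx => ⟨huv x hx, le_rfl, le_rfl⟩)
  have hb : ∀ R : ℝ, ∃ M : ℝ, ∀ y ∈ Om, ‖y‖ < R → |u y| ≤ M ∧ |v y| ≤ M := by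
    intro R
    obtain ⟨M, hM⟩ := below_aux (Om := Om) (u := u) (fun x hx => (a x hx).1.le) R
    obtain ⟨M', hM'⟩ := above_aux (Om := Om) (v := v) (fun x hx => (b x hx).2.ge) R
    refine ⟨max (-M) M', fun y hy hR => ?_⟩
    have := hM y hy hR
    have := hM' y hy hR
    have := huv y hy
    have := le_max_left (-M) M'
    have := le_max_right (-M) M'
    constructor <;> refine abs_le.2 ⟨?_, ?_⟩ <;> linarith
  refine ⟨fun R => ?_, fun R => ?_, huv, fun x hx => (a x hx).1.ge, fun x hx => (b x hx).2.le,
    fun x hx => (a x hx).2.ge, fun x hx => (b x hx).1.le⟩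
  · obtain ⟨M, hM⟩ := hb R
    exact ⟨M, fun y hy hR => (hM y hy hR).1⟩
  · obtain ⟨M, hM⟩ := hb R
    exact ⟨M, fun y hy hR => (hM y hy hR).2⟩

/-- The width of an H-continuous pair cannot stay above `ε` near a point. -/
lemma width {u v : Pt n → ℝ} (h : HContPair Om u v) {x : Pt n} (hx : x ∈ Om) {ε δ : ℝ}
    (hε : 0 < ε) (hδ : 0 < δ) : ∃ y ∈ Om, ‖y - x‖ < δ ∧ v y - u y < ε := by
  obtain ⟨hu, hv, huv, -, hSv, hvS, -⟩ := h.facts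
  by_contra hcon
  push Not at hcon
  obtain ⟨δ', hδ', H⟩ := Shigh_lt hv (x := x) (c := v x + ε / 2) (by linarith [hSv x hx])
  have : Shigh Om Om u x ≤ v x - ε / 2 := by
    refine Shigh_le hx (lt_min hδ hδ') fun y hy hd => ?_
    have := hcon y hy (hd.trans_le (min_le_left _ _))
    have := H y hy (hd.trans_le (min_le_right _ _))
    linarith
  linarith [hvS x hx]

lemma key {u₁ v₁ u₂ v₂ : Pt n → ℝ} (h₁ : HContPair Om u₁ v₁) (h₂ : HContPair Om u₂ v₂) :
    LEon Om (Ilow Om Om (v₁ + v₂)) (Shigh Om Om (u₁ + u₂)) := by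
  obtain ⟨hu1, hv1, -, hIu1, hSv1, -, -⟩ := h₁.facts
  obtain ⟨hu2, hv2, -, -, -, -, -⟩ := h₂.facts
  intro x hx
  by_contra! hlt
  obtain ⟨b, hb1, hb⟩ := exists_between hlt
  obtain ⟨a, hab, ha⟩ := exists_between hb
  obtain ⟨δ, hδ, H⟩ := lt_Ilow (hv1.add hv2) ha
  obtain ⟨δ', hδ', H'⟩ := Shigh_lt (hu1.add hu2) hb1
  have hε : 0 < (a - b) / 2 := by linarith
  obtain ⟨y, hy, hyd, hw⟩ := width h₁ hx hε (lt_min hδ hδ')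
  set η := ((a - b) / 2 - (v₁ y - u₁ y)) / 2 with hη
  have hη0 : 0 < η := by rw [hη]; linarith
  obtain ⟨r, hr, K⟩ := Shigh_lt hv1 (x := y) (c := v₁ y + η) (by linarith [hSv1 y hy])
  obtain ⟨r', hr', K'⟩ := lt_Ilow hu1 (x := y) (c := u₁ y - η) (by linarith [hIu1 y hy])
  have hd0 : 0 < min δ δ' - ‖y - x‖ := by linarith
  obtain ⟨z, hz, hzd, hw'⟩ := width h₂ hy hε (lt_min hd0 (lt_min hr hr'))
  have e1 := hzd.trans_le (min_le_left _ _)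
  have e2 := (hzd.trans_le (min_le_right _ _)).trans_le (min_le_left _ _)
  have e3 := (hzd.trans_le (min_le_right _ _)).trans_le (min_le_right _ _)
  have e4 := norm_add_le (z - y) (y - x)
  rw [sub_add_sub_cancel] at e4
  have e5 : ‖z - x‖ < min δ δ' := by linarith
  have k1 := K z hz e2
  have k2 := K' z hz e3
  have k3 := H z hz (e5.trans_le (min_le_left _ _))
  have k4 := H' z hz (e5.trans_le (min_le_right _ _))
  simp only [Pi.add_apply] at k3 k4
  linarith

/-- `F(h)` is H-continuous as soon as `I(S(h)) ≤ I(h)` and `S(h) ≤ S(I(h))`. -/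
lemma hcont_F {h : Pt n → ℝ} (hh : BB Om h)
    (h1 : LEon Om (Ilow Om Om (Shigh Om Om h)) (Ilow Om Om h))
    (h2 : LEon Om (Shigh Om Om h) (Shigh Om Om (Ilow Om Om h))) :
    HContPair Om (Ilow Om Om h) (Shigh Om Om h) := by
  refine ⟨⟨hh.I.locBdd, hh.S.locBdd, (I_le hh).trans (le_S hh)⟩, ?_⟩
  intro p q _ _ hpq
  have ap : LEon Om (Ilow Om Om h) p := fun x hx => (hpq x hx).1
  have bp : LEon Om p (Shigh Om Om h) := fun x hx => (hpq x hx).2.1.trans (hpq x hx).2.2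
  have aq : LEon Om (Ilow Om Om h) q := fun x hx => (hpq x hx).1.trans (hpq x hx).2.1
  have bq : LEon Om q (Shigh Om Om h) := fun x hx => (hpq x hx).2.2
  have Bp := hh.I.between hh.S ap bp
  have Bq := hh.I.between hh.S aq bq
  intro x hx
  constructor
  · exact le_antisymm (((I_mono Bp bp).trans h1) x hx) (((I_idem hh).trans (I_mono hh.I ap)) x hx)
  · exact le_antisymm (((S_mono hh.S bq).trans (S_idem hh)) x hx) ((h2.trans (S_mono Bq aq)) x hx)

end aux

theorem stmt9 {n : ℕ} (Om : Set (Pt n)) (hOm : IsOpen Om)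
    (u₁ v₁ u₂ v₂ : Pt n → ℝ)
    (h₁ : HContPair Om u₁ v₁) (h₂ : HContPair Om u₂ v₂)
    (s t : Pt n → ℝ)
    (hs : s = fun x => u₁ x + u₂ x) (ht : t = fun x => v₁ x + v₂ x) :
    HContPair Om (Ilow Om Om (Ilow Om Om (Shigh Om Om t)))
      (Shigh Om Om (Ilow Om Om (Shigh Om Om t))) ∧
    (∀ x ∈ Om, s x ≤ Ilow Om Om (Ilow Om Om (Shigh Om Om t)) x ∧
      Ilow Om Om (Ilow Om Om (Shigh Om Om t)) x ≤
        Shigh Om Om (Ilow Om Om (Shigh Om Om t)) x ∧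
      Shigh Om Om (Ilow Om Om (Shigh Om Om t)) x ≤ t x) ∧
    HContPair Om (Ilow Om Om (Shigh Om Om (Ilow Om Om s)))
      (Shigh Om Om (Shigh Om Om (Ilow Om Om s))) ∧
    (∀ x ∈ Om, s x ≤ Ilow Om Om (Shigh Om Om (Ilow Om Om s)) x ∧
      Ilow Om Om (Shigh Om Om (Ilow Om Om s)) x ≤
        Shigh Om Om (Shigh Om Om (Ilow Om Om s)) x ∧
      Shigh Om Om (Shigh Om Om (Ilow Om Om s)) x ≤ t x) ∧
    (∀ pl pu : Pt n → ℝ, IsOplus Om u₁ v₁ u₂ v₂ pl pu →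
      ∀ x ∈ Om,
        pl x = Ilow Om Om (Ilow Om Om (Shigh Om Om t)) x ∧
        pu x = Shigh Om Om (Ilow Om Om (Shigh Om Om t)) x ∧
        pl x = Ilow Om Om (Shigh Om Om (Ilow Om Om s)) x ∧
        pu x = Shigh Om Om (Shigh Om Om (Ilow Om Om s)) x) := by
  replace hs : s = u₁ + u₂ := hs
  replace ht : t = v₁ + v₂ := ht
  obtain ⟨hu1, hv1, huv1, hIu1, hSv1, -, -⟩ := h₁.facts
  obtain ⟨hu2, hv2, huv2, hIu2, hSv2, -, -⟩ := h₂.facts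
  have Bs : BB Om s := hs ▸ hu1.add hu2
  have Bt : BB Om t := ht ▸ hv1.add hv2
  have hst : LEon Om s t := by
    rw [hs, ht]; exact fun x hx => add_le_add (huv1 x hx) (huv2 x hx)
  have sI : LEon Om s (Ilow Om Om s) := hs ▸ I_add hu1 hu2 hIu1 hIu2
  have St : LEon Om (Shigh Om Om t) t := ht ▸ S_add hv1 hv2 hSv1 hSv2
  have hkey : LEon Om (Ilow Om Om t) (Shigh Om Om s) := by
    rw [hs, ht]; exact key h₁ h₂
  have BA := Bt.S.I
  have BB' := Bs.I.S
  -- A = I S t, C = S I s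
  have A1 : LEon Om s (Ilow Om Om (Ilow Om Om (Shigh Om Om t))) :=
    (sI.trans (I_mono Bs (hst.trans (le_S Bt)))).trans (I_idem Bt.S)
  have A2 : LEon Om (Shigh Om Om (Ilow Om Om (Shigh Om Om t))) (Shigh Om Om t) :=
    (S_mono Bt.S (I_le Bt.S)).trans (S_idem Bt)
  have C2 : LEon Om (Shigh Om Om (Shigh Om Om (Ilow Om Om s))) t :=
    (S_idem Bs.I).trans ((S_mono Bt ((I_le Bs).trans hst)).trans St)
  have C1 : LEon Om (Ilow Om Om s) (Ilow Om Om (Shigh Om Om (Ilow Om Om s))) :=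
    (I_idem Bs).trans (I_mono Bs.I (le_S Bs.I))
  have HA := hcont_F BA ((I_mono BA.S A2).trans (I_idem Bt.S)) (S_mono BA.I (I_idem Bt.S))
  have HC := hcont_F BB' (I_mono BB'.S (S_idem Bs.I))
    ((S_idem Bs.I).trans (S_mono BB'.I C1))
  -- comparison
  have AC : LEon Om (Ilow Om Om (Shigh Om Om t)) (Shigh Om Om (Ilow Om Om s)) :=
    ((I_mono Bt.S St).trans hkey).trans (S_mono Bs.I sI)
  refine ⟨HA, fun x hx => ⟨A1 x hx, HA.1.2.2 x hx, (A2.trans St) x hx⟩, HC,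
    fun x hx => ⟨(sI.trans C1) x hx, HC.1.2.2 x hx, C2 x hx⟩, ?_⟩
  rintro pl pu ⟨hp, hin⟩
  obtain ⟨Bl, Bu, hlu, hIl, hSu, hul, hIu⟩ := hp.facts
  have spl : LEon Om s pl := by rw [hs]; exact fun x hx => (hin x hx).1
  have put : LEon Om pu t := by rw [ht]; exact fun x hx => (hin x hx).2.2
  have m1 : LEon Om pl (Ilow Om Om (Shigh Om Om t)) :=
    hIl.trans (I_mono Bl (hlu.trans (put.trans (le_S Bt))))
  have m2 : LEon Om (Shigh Om Om (Ilow Om Om s)) pu :=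
    (S_mono Bu ((I_le Bs).trans (spl.trans hlu))).trans hSu
  have l1 : LEon Om pl (Ilow Om Om (Ilow Om Om (Shigh Om Om t))) := m1.trans (I_idem Bt.S)
  have l2 : LEon Om (Ilow Om Om (Ilow Om Om (Shigh Om Om t)))
      (Ilow Om Om (Shigh Om Om (Ilow Om Om s))) := I_mono BA AC
  have l3 : LEon Om (Ilow Om Om (Shigh Om Om (Ilow Om Om s))) pl := (I_mono BB' m2).trans hIu
  have r1 : LEon Om pu (Shigh Om Om (Ilow Om Om (Shigh Om Om t))) := hul.trans (S_mono BA m1)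
  have r2 : LEon Om (Shigh Om Om (Ilow Om Om (Shigh Om Om t)))
      (Shigh Om Om (Shigh Om Om (Ilow Om Om s))) := S_mono BB' AC
  have r3 : LEon Om (Shigh Om Om (Shigh Om Om (Ilow Om Om s))) pu := (S_mono Bu m2).trans hSu
  intro x hx
  exact ⟨le_antisymm (l1 x hx) ((l2.trans l3) x hx), le_antisymm (r1 x hx) ((r2.trans r3) x hx),
    le_antisymm ((l1.trans l2) x hx) (l3 x hx), le_antisymm ((r1.trans r2) x hx) (r3 x hx)⟩
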